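/- Let x > 0 be real and set q = e^{−π/x}. Then F_{(6,1)}(x) = −(π/(√3 · x)) · log( (φ(−q⁴) − 3φ(−q³⁶) + 2√3 · q · f(−q²⁴)) / (φ(−q⁴) − 3φ(−q³⁶) − 2√3 · q · f(−q²⁴)) ). -/

import Mathlib

open Filter

/-- Ramanujan's theta function `φ(q) = ∑_{n ∈ ℤ} q^{n²}`. -/
noncomputable def phi (q : ℝ) : ℝ := ∑' n : ℤ, q ^ (n ^ 2)

/-- Ramanujan's function `f(-q) = ∏_{m=1}^∞ (1 - q^m)`, as a function of `q`. -/
noncomputable def fneg (q : ℝ) : ℝ := ∏' m : ℕ, (1 - q ^ (m + 1))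


lemma hs_congr {ι : Type*} {f g : ι → ℝ} {a b : ℝ} (h : HasSum f a) (hf : ∀ i, g i = f i)
    (ha : b = a) : HasSum g b := by
  rw [ha, funext hf]; exact h

section Jtp
open Finset

noncomputable def Pq (p : ℝ) (k : ℕ) : ℝ := ∏ i ∈ Finset.range k, (1 - p ^ (i + 1))
noncomputable def Rq (p : ℝ) (k : ℤ) : ℝ := if 0 ≤ k then (Pq p k.toNat)⁻¹ else 0
noncomputable def cq (p : ℝ) (N : ℕ) (n : ℤ) : ℝ := Pq p (2 * N) * Rq p (N - n) * Rq p (N + n)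

lemma one_sub_pos' {p : ℝ} (h0 : 0 < p) (h1 : p < 1) (i : ℕ) : 0 < 1 - p ^ (i + 1) := by
  have := pow_lt_one₀ h0.le h1 (Nat.succ_ne_zero i)
  simpa using this

lemma Pq_pos {p : ℝ} (h0 : 0 < p) (h1 : p < 1) (k : ℕ) : 0 < Pq p k :=
  Finset.prod_pos fun i _ => one_sub_pos' h0 h1 i

lemma Rq_rec {p : ℝ} (h0 : 0 < p) (h1 : p < 1) (k : ℤ) :
    Rq p (k - 1) = (1 - p ^ k) * Rq p k := by
  rcases lt_trichotomy k 0 with h | h | h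
  · simp [Rq, not_le.mpr h, show ¬ (1 ≤ k) by omega]
  · subst h; simp [Rq]
  · obtain ⟨m, rfl⟩ : ∃ m : ℕ, k = m + 1 := ⟨(k - 1).toNat, by omega⟩
    have e : ((m : ℤ) + 1).toNat = m + 1 := by omega
    have hz : p ^ ((m : ℤ) + 1) = p ^ (m + 1) := by exact_mod_cast zpow_natCast p (m + 1)
    have := (one_sub_pos' h0 h1 m).ne'
    have := (Pq_pos h0 h1 m).ne'
    simp only [Rq, add_sub_cancel_right, Int.natCast_nonneg, if_true, Int.toNat_natCast, e, hz,
      show (0 : ℤ) ≤ m + 1 by omega]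
    rw [Pq, Pq, Finset.prod_range_succ]
    rw [Pq] at this
    field_simp

lemma cq_zero_of {p : ℝ} (N : ℕ) (n : ℤ) (h : n ∉ Finset.Icc (-(N : ℤ)) N) : cq p N n = 0 := by
  simp only [Finset.mem_Icc, not_and_or, not_le] at h
  rcases h with h | h
  · simp [cq, Rq, show ¬ (0 ≤ (N : ℤ) + n) by omega]
  · simp [cq, Rq, show ¬ (n ≤ (N : ℤ)) by omega]

lemma cq_rec {q : ℝ} (h0 : 0 < q) (h1 : q < 1) (N : ℕ) (n : ℤ) :
    cq (q ^ 2) (N + 1) n * q ^ (n ^ 2) =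
      (1 + q ^ (4 * N + 2)) * (cq (q ^ 2) N n * q ^ (n ^ 2)) +
      q ^ (2 * N + 1) * (cq (q ^ 2) N (n - 1) * q ^ ((n - 1) ^ 2)
        + cq (q ^ 2) N (n + 1) * q ^ ((n + 1) ^ 2)) := by
  have p0 : 0 < q ^ 2 := by positivity
  have p1 : q ^ 2 < 1 := pow_lt_one₀ h0.le h1 two_ne_zero
  have hq : q ≠ 0 := h0.ne'
  set u := Rq (q ^ 2) (N + 1 - n) with hu
  set v := Rq (q ^ 2) (N + 1 + n) with hv
  set M := q ^ N with hM
  set m := q ^ n with hm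
  have hm0 : m ≠ 0 := zpow_ne_zero _ hq
  have hM0 : M ≠ 0 := pow_ne_zero _ hq
  have ea : (q ^ 2) ^ ((N : ℤ) + 1 - n) = q ^ 2 * M ^ 2 / m ^ 2 := by
    rw [zpow_sub₀ p0.ne', zpow_add₀ p0.ne', zpow_natCast, zpow_one, ← pow_mul, hM, hm]
    have : (q ^ 2) ^ n = (q ^ n) ^ 2 := by
      rw [← zpow_natCast q 2, ← zpow_natCast (q ^ n), ← zpow_mul, ← zpow_mul, mul_comm]
    rw [this]; ring
  have eb : (q ^ 2) ^ ((N : ℤ) + 1 + n) = q ^ 2 * M ^ 2 * m ^ 2 := by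
    rw [zpow_add₀ p0.ne', zpow_add₀ p0.ne', zpow_natCast, zpow_one, ← pow_mul, hM, hm]
    have : (q ^ 2) ^ n = (q ^ n) ^ 2 := by
      rw [← zpow_natCast q 2, ← zpow_natCast (q ^ n), ← zpow_mul, ← zpow_mul, mul_comm]
    rw [this]; ring
  have ea' : (q ^ 2) ^ ((N : ℤ) - n) = M ^ 2 / m ^ 2 := by
    rw [show (N : ℤ) - n = (N + 1 - n) - 1 by ring, zpow_sub_one₀ p0.ne', ea]; field_simp
  have eb' : (q ^ 2) ^ ((N : ℤ) + n) = M ^ 2 * m ^ 2 := by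
    rw [show (N : ℤ) + n = (N + 1 + n) - 1 by ring, zpow_sub_one₀ p0.ne', eb]; field_simp
  have r1 : Rq (q ^ 2) (N - n) = (1 - q ^ 2 * M ^ 2 / m ^ 2) * u := by
    rw [← ea, hu, ← Rq_rec p0 p1]; ring_nf
  have r2 : Rq (q ^ 2) (N + n) = (1 - q ^ 2 * M ^ 2 * m ^ 2) * v := by
    rw [← eb, hv, ← Rq_rec p0 p1]; ring_nf
  have r3 : Rq (q ^ 2) (N - (n + 1)) = (1 - M ^ 2 / m ^ 2) * ((1 - q ^ 2 * M ^ 2 / m ^ 2) * u) := by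
    rw [← r1, ← ea', ← Rq_rec p0 p1]; ring_nf
  have r4 : Rq (q ^ 2) (N + (n - 1)) = (1 - M ^ 2 * m ^ 2) * ((1 - q ^ 2 * M ^ 2 * m ^ 2) * v) := by
    rw [← r2, ← eb', ← Rq_rec p0 p1]; ring_nf
  have r5 : Rq (q ^ 2) (N - (n - 1)) = u := by rw [hu]; ring_nf
  have r6 : Rq (q ^ 2) (N + (n + 1)) = v := by rw [hv]; ring_nf
  have s1 : q ^ ((n - 1) ^ 2) = q ^ (n ^ 2) * q / m ^ 2 := by
    rw [hm, show (n - 1) ^ 2 = n ^ 2 + 1 - n * 2 by ring, zpow_sub₀ hq, zpow_add₀ hq, zpow_one, zpow_mul]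
    norm_cast
  have s2 : q ^ ((n + 1) ^ 2) = q ^ (n ^ 2) * q * m ^ 2 := by
    rw [hm, show (n + 1) ^ 2 = n ^ 2 + 1 + n * 2 by ring, zpow_add₀ hq, zpow_add₀ hq, zpow_one, zpow_mul]
    norm_cast
  have t1 : q ^ (4 * N + 2) = M ^ 4 * q ^ 2 := by rw [hM]; ring
  have t2 : q ^ (2 * N + 1) = M ^ 2 * q := by rw [hM]; ring
  have hP : Pq (q ^ 2) (2 * (N + 1)) = Pq (q ^ 2) (2 * N) * (1 - q ^ 2 * M ^ 4) * (1 - q ^ 4 * M ^ 4) := by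
    rw [show 2 * (N + 1) = 2 * N + 1 + 1 by ring, Pq, Pq, prod_range_succ, prod_range_succ, hM]
    ring
  have r7 : Rq (q ^ 2) (((N + 1 : ℕ) : ℤ) - n) = u := by rw [hu]; push_cast; rfl
  have r8 : Rq (q ^ 2) (((N + 1 : ℕ) : ℤ) + n) = v := by rw [hv]; push_cast; rfl
  simp only [cq, r1, r2, r3, r4, r5, r6, r7, r8, s1, s2, t1, t2, hP]
  field_simp
  ring

lemma jtp_fin {q : ℝ} (h0 : 0 < q) (h1 : q < 1) {t : ℝ} {w : ℤ → ℝ}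
    (hw : ∀ n, w (n + 1) + w (n - 1) = t * w n) (w0 : w 0 = 1) (N : ℕ) :
    HasSum (fun n : ℤ => cq (q ^ 2) N n * q ^ (n ^ 2) * w n)
      (∏ j ∈ Finset.range N, (1 + t * q ^ (2 * j + 1) + q ^ (4 * j + 2))) := by
  induction N with
  | zero =>
    have := hasSum_single (f := fun n : ℤ => cq (q ^ 2) 0 n * q ^ (n ^ 2) * w n) 0 (by
      intro n hn
      rw [cq_zero_of 0 n (by simpa using hn)]
      simp)
    simpa [cq, Rq, Pq, w0] using this
  | succ N ih =>
    have hsum (w' : ℤ → ℝ) : Summable (fun n : ℤ => cq (q ^ 2) N n * q ^ (n ^ 2) * w' n) := by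
      apply summable_of_ne_finset_zero (s := Finset.Icc (-(N : ℤ)) N)
      intro n hn
      rw [cq_zero_of N n hn]; simp
    obtain ⟨S1, H1⟩ := hsum fun n => w (n + 1)
    obtain ⟨S2, H2⟩ := hsum fun n => w (n - 1)
    have e : S1 + S2 = t * ∏ j ∈ Finset.range N, (1 + t * q ^ (2 * j + 1) + q ^ (4 * j + 2)) := by
      refine (H1.add H2).unique ?_
      have ee := ih.mul_left t
      refine hs_congr ee (fun n => ?_) rfl
      linear_combination (cq (q ^ 2) N n * q ^ (n ^ 2)) * hw n
    have H1' := (Equiv.subRight (1 : ℤ)).hasSum_iff.mpr H1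
    have H2' := (Equiv.addRight (1 : ℤ)).hasSum_iff.mpr H2
    have := (ih.mul_left (1 + q ^ (4 * N + 2))).add ((H1'.add H2').mul_left (q ^ (2 * N + 1)))
    rw [e] at this
    rw [prod_range_succ]
    refine hs_congr this (fun n => ?_) ?_
    · rw [cq_rec h0 h1]
      simp
      ring
    · ring

lemma multipliable_fneg {p : ℝ} (h0 : 0 < p) (h1 : p < 1) :
    Multipliable fun m : ℕ => 1 - p ^ (m + 1) := by
  have : Summable fun m : ℕ => -(p ^ (m + 1)) :=
    ((summable_nat_add_iff 1).mpr (summable_geometric_of_lt_one h0.le h1)).neg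
  simpa [sub_eq_add_neg] using Real.multipliable_one_add_of_summable this

lemma fneg_pos {p : ℝ} (h0 : 0 < p) (h1 : p < 1) : 0 < fneg p := by
  have : Summable fun m : ℕ => -(p ^ (m + 1)) :=
    ((summable_nat_add_iff 1).mpr (summable_geometric_of_lt_one h0.le h1)).neg
  have := Real.summable_log_one_add_of_summable this
  have := Real.rexp_tsum_eq_tprod (f := fun m : ℕ => 1 - p ^ (m + 1)) (one_sub_pos' h0 h1) (by simpa [sub_eq_add_neg] using this)
  rw [fneg, ← this]
  positivity

lemma Pq_tendsto {p : ℝ} (h0 : 0 < p) (h1 : p < 1) : Tendsto (Pq p) atTop (nhds (fneg p)) :=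
  (multipliable_fneg h0 h1).tendsto_prod_tprod_nat

lemma Pq_le_one {p : ℝ} (h0 : 0 < p) (h1 : p < 1) (k : ℕ) : Pq p k ≤ 1 :=
  Finset.prod_le_one (fun i _ => (one_sub_pos' h0 h1 i).le) fun i _ => by
    have : 0 < p ^ (i + 1) := by positivity
    linarith

lemma fneg_le_Pq {p : ℝ} (h0 : 0 < p) (h1 : p < 1) (k : ℕ) : fneg p ≤ Pq p k := by
  have : Antitone (Pq p) := by
    apply antitone_nat_of_succ_le
    intro n
    rw [Pq, prod_range_succ]
    apply mul_le_of_le_one_right (Pq_pos h0 h1 n).le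
    have : 0 < p ^ (n + 1) := by positivity
    linarith
  exact this.le_of_tendsto (Pq_tendsto h0 h1) k

lemma Rq_nonneg {p : ℝ} (h0 : 0 < p) (h1 : p < 1) (k : ℤ) : 0 ≤ Rq p k := by
  rw [Rq]; split_ifs
  · exact (inv_pos.mpr (Pq_pos h0 h1 _)).le
  · exact le_rfl

lemma Rq_le {p : ℝ} (h0 : 0 < p) (h1 : p < 1) (k : ℤ) : Rq p k ≤ (fneg p)⁻¹ := by
  rw [Rq]; split_ifs
  · exact inv_anti₀ (fneg_pos h0 h1) (fneg_le_Pq h0 h1 _)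
  · exact (inv_pos.mpr (fneg_pos h0 h1)).le

lemma Rq_tendsto {p : ℝ} (h0 : 0 < p) (h1 : p < 1) : Tendsto (Rq p) atTop (nhds (fneg p)⁻¹) := by
  have : Tendsto (fun k : ℤ => (Pq p k.toNat)⁻¹) atTop (nhds (fneg p)⁻¹) := by
    refine ((Pq_tendsto h0 h1).comp ?_).inv₀ (fneg_pos h0 h1).ne'
    exact tendsto_atTop.mpr fun b => by
      filter_upwards [eventually_ge_atTop (b : ℤ)] with a ha
      omega
  refine this.congr' ?_
  filter_upwards [eventually_ge_atTop 0] with a ha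
  simp [Rq, ha]

lemma cq_tendsto {p : ℝ} (h0 : 0 < p) (h1 : p < 1) (n : ℤ) :
    Tendsto (fun N => cq p N n) atTop (nhds (fneg p)⁻¹) := by
  have a1 : Tendsto (fun N : ℕ => Pq p (2 * N)) atTop (nhds (fneg p)) :=
    (Pq_tendsto h0 h1).comp (tendsto_id.const_mul_atTop' two_pos)
  have a2 : Tendsto (fun N : ℕ => Rq p (N - n)) atTop (nhds (fneg p)⁻¹) :=
    (Rq_tendsto h0 h1).comp (tendsto_atTop_add_const_right _ (-n) tendsto_natCast_atTop_atTop)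
  have a3 : Tendsto (fun N : ℕ => Rq p (N + n)) atTop (nhds (fneg p)⁻¹) :=
    (Rq_tendsto h0 h1).comp (tendsto_atTop_add_const_right _ n tendsto_natCast_atTop_atTop)
  have := (a1.mul a2).mul a3
  rw [mul_inv_cancel₀ (fneg_pos h0 h1).ne', one_mul] at this
  exact this

lemma jtp {q : ℝ} (h0 : 0 < q) (h1 : q < 1) {t : ℝ} {w : ℤ → ℝ}
    (hw : ∀ n, w (n + 1) + w (n - 1) = t * w n) (w0 : w 0 = 1)
    (hs : Summable fun n : ℤ => q ^ (n ^ 2) * |w n|) :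
    Tendsto (fun N => ∏ j ∈ Finset.range N, (1 + t * q ^ (2 * j + 1) + q ^ (4 * j + 2))) atTop
      (nhds ((fneg (q ^ 2))⁻¹ * ∑' n : ℤ, q ^ (n ^ 2) * w n)) := by
  have p0 : 0 < q ^ 2 := by positivity
  have p1 : q ^ 2 < 1 := pow_lt_one₀ h0.le h1 two_ne_zero
  have key := tendsto_tsum_of_dominated_convergence (𝓕 := atTop)
    (f := fun (N : ℕ) (n : ℤ) => cq (q ^ 2) N n * q ^ (n ^ 2) * w n)
    (g := fun n : ℤ => (fneg (q ^ 2))⁻¹ * (q ^ (n ^ 2) * w n))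
    (bound := fun n : ℤ => ((fneg (q ^ 2))⁻¹ * (fneg (q ^ 2))⁻¹) * (q ^ (n ^ 2) * |w n|))
    (hs.mul_left _) ?_ ?_
  · rw [tsum_mul_left] at key
    refine key.congr fun N => (jtp_fin h0 h1 hw w0 N).tsum_eq
  · intro n
    simp only [← mul_assoc]
    exact ((cq_tendsto p0 p1 n).mul_const _).mul_const _
  · refine Eventually.of_forall fun N n => ?_
    have hz : 0 < q ^ (n ^ 2) := zpow_pos h0 _
    rw [norm_mul, norm_mul, Real.norm_eq_abs, Real.norm_eq_abs, Real.norm_eq_abs, abs_of_pos hz,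
      mul_assoc]
    gcongr
    have i1 := Rq_nonneg p0 p1 (N - n)
    have i2 := Rq_nonneg p0 p1 (N + n)
    have i3 := (Pq_pos p0 p1 (2 * N)).le
    have i4 := fneg_pos p0 p1
    rw [cq, abs_of_nonneg (by positivity)]
    gcongr
    · calc _ ≤ 1 * Rq (q ^ 2) (N - n) := by gcongr; exact Pq_le_one p0 p1 _
        _ ≤ _ := by rw [one_mul]; exact Rq_le p0 p1 _
    · exact Rq_le p0 p1 _

end Jtp

section Theta

lemma m1 (k : ℤ) : (-1 : ℝ) ^ k = if k % 2 = 0 then 1 else -1 := by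
  split_ifs with h
  · exact (Int.even_iff.mpr h).neg_one_zpow
  · exact (Int.odd_iff.mpr (by omega)).neg_one_zpow

noncomputable def e2 (n : ℤ) : ℝ := if n % 4 = 0 then 1 else if n % 4 = 2 then -1 else 0
noncomputable def e6 (n : ℤ) : ℝ := if n % 12 = 0 then 1 else if n % 12 = 6 then -1 else 0
noncomputable def o1 (n : ℤ) : ℝ := if n % 12 = 1 then 1 else if n % 12 = 7 then -1 else 0
noncomputable def chi (n : ℤ) : ℝ := o1 n + o1 (-n)
noncomputable def wr (r : ℝ) (n : ℤ) : ℝ := -(1/2) * e2 n + 3/2 * e6 n + r / 2 * chi n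

lemma wr_val (r : ℝ) (n : ℤ) : wr r n =
    if n % 12 = 0 then 1 else if n % 12 = 1 then r / 2 else if n % 12 = 2 then 1/2 else
    if n % 12 = 3 then 0 else if n % 12 = 4 then -(1/2) else if n % 12 = 5 then -(r/2) else
    if n % 12 = 6 then -1 else if n % 12 = 7 then -(r/2) else if n % 12 = 8 then -(1/2) else
    if n % 12 = 9 then 0 else if n % 12 = 10 then 1/2 else r/2 := by
  have h : n % 12 = 0 ∨ n % 12 = 1 ∨ n % 12 = 2 ∨ n % 12 = 3 ∨ n % 12 = 4 ∨ n % 12 = 5 ∨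
    n % 12 = 6 ∨ n % 12 = 7 ∨ n % 12 = 8 ∨ n % 12 = 9 ∨ n % 12 = 10 ∨ n % 12 = 11 := by omega
  have h4 : n % 4 = (n % 12) % 4 := by omega
  have hn : (-n) % 12 = (12 - n % 12) % 12 := by omega
  simp only [wr, e2, e6, chi, o1, h4, hn]
  rcases h with h | h | h | h | h | h | h | h | h | h | h | h <;> norm_num [h]

lemma wr_rec {r : ℝ} (hr : r ^ 2 = 3) (n : ℤ) : wr r (n + 1) + wr r (n - 1) = r * wr r n := by
  have h : n % 12 = 0 ∨ n % 12 = 1 ∨ n % 12 = 2 ∨ n % 12 = 3 ∨ n % 12 = 4 ∨ n % 12 = 5 ∨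
    n % 12 = 6 ∨ n % 12 = 7 ∨ n % 12 = 8 ∨ n % 12 = 9 ∨ n % 12 = 10 ∨ n % 12 = 11 := by omega
  have ha : (n + 1) % 12 = (n % 12 + 1) % 12 := by omega
  have hn : (n - 1) % 12 = (n % 12 + 11) % 12 := by omega
  simp only [wr_val, ha, hn]
  rcases h with h | h | h | h | h | h | h | h | h | h | h | h <;> norm_num [h] <;> nlinarith

lemma wr_zero (r : ℝ) : wr r 0 = 1 := by simp [wr_val]

lemma chi_abs (n : ℤ) : |chi n| ≤ 1 := by
  simp only [chi, o1]
  split_ifs <;> first | omega | norm_num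

lemma wr_abs (r : ℝ) (n : ℤ) : |wr r n| ≤ 1 + |r| := by
  have a1 := abs_nonneg r
  have a2 := le_abs_self r
  have a3 := neg_abs_le r
  have h : n % 12 = 0 ∨ n % 12 = 1 ∨ n % 12 = 2 ∨ n % 12 = 3 ∨ n % 12 = 4 ∨ n % 12 = 5 ∨
    n % 12 = 6 ∨ n % 12 = 7 ∨ n % 12 = 8 ∨ n % 12 = 9 ∨ n % 12 = 10 ∨ n % 12 = 11 := by omega
  rw [wr_val, abs_le]
  rcases h with h | h | h | h | h | h | h | h | h | h | h | h <;> norm_num [h] <;>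
    first | linarith | (constructor <;> linarith)

lemma summable_natAbs {q : ℝ} (h0 : 0 < q) (h1 : q < 1) : Summable fun n : ℤ => q ^ n.natAbs := by
  have := summable_geometric_of_lt_one h0.le h1
  exact Summable.of_nat_of_neg (by simpa using this) (by simpa using this)

lemma zpow_le_natAbs {q : ℝ} (h0 : 0 < q) (h1 : q < 1) {n k : ℤ} (h : (n.natAbs : ℤ) ≤ k) :
    q ^ k ≤ q ^ n.natAbs := by
  rw [← zpow_natCast]
  exact zpow_le_zpow_right_of_le_one₀ h0 h1.le h

lemma natAbs_le_sq (n : ℤ) : (n.natAbs : ℤ) ≤ n ^ 2 := by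
  have := Int.le_self_sq (n.natAbs : ℤ)
  rwa [Int.natCast_natAbs, sq_abs, ← Int.natCast_natAbs] at this

lemma summable_sq {q : ℝ} (h0 : 0 < q) (h1 : q < 1) : Summable fun n : ℤ => q ^ (n ^ 2) :=
  Summable.of_nonneg_of_le (fun _ => (zpow_pos h0 _).le)
    (fun n => zpow_le_natAbs h0 h1 (natAbs_le_sq n)) (summable_natAbs h0 h1)

lemma Pq_succ (p : ℝ) (k : ℕ) : Pq p (k + 1) = Pq p k * (1 - p ^ (k + 1)) :=
  Finset.prod_range_succ _ _

lemma pentagonal_sum {s : ℝ} (h0 : 0 < s) (h1 : s < 1) :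
    HasSum (fun n : ℤ => (s ^ 3) ^ (n ^ 2) * (-s) ^ n) (fneg (s ^ 2)) := by
  have q0 : 0 < s ^ 3 := by positivity
  have q1 : s ^ 3 < 1 := pow_lt_one₀ h0.le h1 (by norm_num)
  have p0 : 0 < s ^ 2 := by positivity
  have p1 : s ^ 2 < 1 := pow_lt_one₀ h0.le h1 (by norm_num)
  have p60 : 0 < (s ^ 3) ^ 2 := by positivity
  have p61 : (s ^ 3) ^ 2 < 1 := pow_lt_one₀ q0.le q1 (by norm_num)
  have hs : Summable fun n : ℤ => (s ^ 3) ^ (n ^ 2) * |(-s) ^ n| := by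
    refine Summable.of_nonneg_of_le (fun n => mul_nonneg (zpow_pos q0 _).le (abs_nonneg _))
      (fun n => ?_) (summable_natAbs h0 h1)
    rw [abs_zpow, abs_neg, abs_of_pos h0, ← zpow_natCast s 3, ← zpow_mul, ← zpow_add₀ h0.ne']
    apply zpow_le_natAbs h0 h1
    have := natAbs_le_sq n
    have h2 : -(n.natAbs : ℤ) ≤ n := by omega
    have h3 : (0 : ℤ) ≤ n.natAbs := by omega
    have h4 : ((3 : ℕ) : ℤ) * n ^ 2 = 3 * n ^ 2 := by norm_num
    rw [h4]
    linarith
  have hs' : Summable fun n : ℤ => (s ^ 3) ^ (n ^ 2) * (-s) ^ n := by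
    refine Summable.of_norm (hs.congr fun n => ?_)
    rw [norm_mul, Real.norm_eq_abs, Real.norm_eq_abs, abs_of_pos (zpow_pos q0 _)]
  have key := jtp q0 q1 (t := -(s + s⁻¹)) (w := fun n => (-s) ^ n) (fun n => by
    rw [zpow_add_one₀ (by linarith), zpow_sub_one₀ (by linarith)]
    rw [inv_neg]; ring) (by simp) hs
  have k2 := (Pq_tendsto p60 p61).mul key
  rw [← mul_assoc, mul_inv_cancel₀ (fneg_pos p60 p61).ne', one_mul] at k2
  have k3 : Tendsto (fun N : ℕ => Pq (s ^ 2) (3 * N)) atTop (nhds (fneg (s ^ 2))) :=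
    (Pq_tendsto p0 p1).comp (tendsto_id.const_mul_atTop' three_pos)
  have k4 := tendsto_nhds_unique (k2.congr fun N => ?_) k3
  · rw [← k4]; exact hs'.hasSum
  · induction N with
    | zero => simp [Pq]
    | succ N ih =>
      rw [Finset.prod_range_succ, show 3 * (N + 1) = 3 * N + 1 + 1 + 1 by ring]
      rw [Pq_succ, Pq_succ, Pq_succ, Pq_succ, ← ih]
      have : (1 + -(s + s⁻¹) * (s ^ 3) ^ (2 * N + 1) + (s ^ 3) ^ (4 * N + 2)) =
        (1 - (s ^ 2) ^ (3 * N + 1)) * (1 - (s ^ 2) ^ (3 * N + 1 + 1)) := by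
        field_simp; ring
      rw [this]; ring

lemma hasSum_o1 {q : ℝ} (h0 : 0 < q) (h1 : q < 1) :
    HasSum (fun n : ℤ => q ^ (n ^ 2) * o1 n) (q * fneg (q ^ 24)) := by
  have s0 : 0 < q ^ 12 := by positivity
  have s1 : q ^ 12 < 1 := pow_lt_one₀ h0.le h1 (by norm_num)
  have := (pentagonal_sum s0 s1).mul_left q
  have inj : Function.Injective fun k : ℤ => 6 * k + 1 := fun a b h => by simp at h; omega
  rw [← inj.hasSum_iff]
  · refine hs_congr this (fun k => ?_) (by ring_nf)
    simp only [Function.comp]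
    have e : o1 (6 * k + 1) = (-1) ^ k := by
      rw [m1, o1]; split_ifs <;> first | omega | rfl
    rw [e, ← neg_one_mul (q ^ 12), mul_zpow, show (6 * k + 1) ^ 2 = 1 + 36 * k ^ 2 + 12 * k by ring,
      zpow_add₀ h0.ne', zpow_add₀ h0.ne', zpow_one, zpow_mul, zpow_mul, ← pow_mul]
    norm_cast
    ring
  · intro n hn
    rw [o1, if_neg, if_neg, mul_zero]
    · intro h; exact hn ⟨(n - 1) / 6, by simp; omega⟩
    · intro h; exact hn ⟨(n - 1) / 6, by simp; omega⟩

lemma neg_zpow_sq (a : ℝ) (k : ℤ) : (-a) ^ (k ^ 2) = (-1) ^ k * a ^ (k ^ 2) := by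
  rw [← neg_one_mul a, mul_zpow, m1, m1]
  congr 2
  rcases Int.even_or_odd k with h | h
  · have : Even (k ^ 2) := by simp [Int.even_pow, h]
    simp [Int.even_iff.mp h, Int.even_iff.mp this]
  · have : Odd (k ^ 2) := h.pow
    simp [Int.odd_iff.mp h, Int.odd_iff.mp this]

lemma hasSum_e2 {q : ℝ} (h0 : 0 < q) (h1 : q < 1) :
    HasSum (fun n : ℤ => q ^ (n ^ 2) * e2 n) (phi (-(q ^ 4))) := by
  have inj : Function.Injective fun k : ℤ => 2 * k := fun a b h => by simp at h; omega
  have : Summable fun n : ℤ => (-(q ^ 4)) ^ (n ^ 2) := by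
    refine Summable.of_norm ((summable_sq (q := q ^ 4) (by positivity) (pow_lt_one₀ h0.le h1 (by norm_num))).congr fun n => ?_)
    rw [norm_zpow, norm_neg, Real.norm_eq_abs, abs_of_pos (by positivity)]
  rw [← inj.hasSum_iff]
  · refine hs_congr this.hasSum (fun k => ?_) rfl
    simp only [Function.comp]
    have e : e2 (2 * k) = (-1) ^ k := by
      rw [m1, e2]; split_ifs <;> first | omega | rfl
    rw [e, neg_zpow_sq, mul_comm, show (2 * k) ^ 2 = 4 * k ^ 2 by ring, zpow_mul]
    norm_cast
  · intro n hn
    rw [e2, if_neg, if_neg, mul_zero]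
    · intro h; exact hn ⟨n / 2, by simp; omega⟩
    · intro h; exact hn ⟨n / 2, by simp; omega⟩

lemma hasSum_e6 {q : ℝ} (h0 : 0 < q) (h1 : q < 1) :
    HasSum (fun n : ℤ => q ^ (n ^ 2) * e6 n) (phi (-(q ^ 36))) := by
  have inj : Function.Injective fun k : ℤ => 6 * k := fun a b h => by simp at h; omega
  have : Summable fun n : ℤ => (-(q ^ 36)) ^ (n ^ 2) := by
    refine Summable.of_norm ((summable_sq (q := q ^ 36) (by positivity) (pow_lt_one₀ h0.le h1 (by norm_num))).congr fun n => ?_)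
    rw [norm_zpow, norm_neg, Real.norm_eq_abs, abs_of_pos (by positivity)]
  rw [← inj.hasSum_iff]
  · refine hs_congr this.hasSum (fun k => ?_) rfl
    simp only [Function.comp]
    have e : e6 (6 * k) = (-1) ^ k := by
      rw [m1, e6]; split_ifs <;> first | omega | rfl
    rw [e, neg_zpow_sq, mul_comm, show (6 * k) ^ 2 = 36 * k ^ 2 by ring, zpow_mul]
    norm_cast
  · intro n hn
    rw [e6, if_neg, if_neg, mul_zero]
    · intro h; exact hn ⟨n / 6, by simp; omega⟩
    · intro h; exact hn ⟨n / 6, by simp; omega⟩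

lemma theta_eval {q : ℝ} (h0 : 0 < q) (h1 : q < 1) (r : ℝ) :
    ∑' n : ℤ, q ^ (n ^ 2) * wr r n =
      -(1/2) * phi (-(q ^ 4)) + 3/2 * phi (-(q ^ 36)) + r * (q * fneg (q ^ 24)) := by
  have ho := hasSum_o1 h0 h1
  have ho' := (Equiv.neg ℤ).hasSum_iff.mpr ho
  refine HasSum.tsum_eq (hs_congr ((((hasSum_e2 h0 h1).mul_left (-(1/2))).add
    ((hasSum_e6 h0 h1).mul_left (3/2))).add ((ho.add ho').mul_left (r/2))) (fun n => ?_) (by ring))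
  simp [wr, chi]; ring

/-- Jacobi triple product at the relevant points, with logs. -/
lemma log_prod {q : ℝ} (h0 : 0 < q) (h1 : q < 1) {r : ℝ} (hr : r ^ 2 = 3) :
    0 < -(1/2) * phi (-(q ^ 4)) + 3/2 * phi (-(q ^ 36)) + r * (q * fneg (q ^ 24)) ∧
    HasSum (fun j : ℕ => Real.log (1 + r * q ^ (2 * j + 1) + (q ^ (2 * j + 1)) ^ 2))
     (Real.log (-(1/2) * phi (-(q ^ 4)) + 3/2 * phi (-(q ^ 36)) + r * (q * fneg (q ^ 24)))
      - Real.log (fneg (q ^ 2))) := by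
  have p0 : 0 < q ^ 2 := by positivity
  have p1 : q ^ 2 < 1 := pow_lt_one₀ h0.le h1 two_ne_zero
  have hs : Summable fun n : ℤ => q ^ (n ^ 2) * |wr r n| :=
    Summable.of_nonneg_of_le (fun n => mul_nonneg (zpow_pos h0 _).le (abs_nonneg _))
      (fun n => mul_le_mul_of_nonneg_left (wr_abs r n) (zpow_pos h0 _).le)
      ((summable_sq h0 h1).mul_right _)
  have key := jtp h0 h1 (wr_rec hr) (wr_zero r) hs
  rw [theta_eval h0 h1] at key
  set T := -(1/2) * phi (-(q ^ 4)) + 3/2 * phi (-(q ^ 36)) + r * (q * fneg (q ^ 24))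
  have hpos : ∀ y : ℝ, 0 < 1 + r * y + y ^ 2 := fun y => by
    nlinarith [sq_nonneg (r * y + 3/2)]
  have g1 : Summable fun j : ℕ => q ^ (2 * j + 1) := by
    have := (summable_geometric_of_lt_one p0.le p1).mul_left q
    refine this.congr fun j => ?_
    ring
  have g2 : Summable fun j : ℕ => (q ^ (2 * j + 1)) ^ 2 := by
    refine Summable.of_nonneg_of_le (fun j => by positivity) (fun j => ?_) g1
    exact pow_le_of_le_one (by positivity) (pow_le_one₀ h0.le h1.le) two_ne_zero
  have hl := Real.summable_log_one_add_of_summable ((g1.mul_left r).add g2)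
  simp only [← add_assoc] at hl
  have hp := (Real.hasProd_of_hasSum_log (fun j => hpos _) hl.hasSum).tendsto_prod_nat
  have e := tendsto_nhds_unique (hp.congr fun N => Finset.prod_congr rfl fun j _ => by ring) key
  have hf := fneg_pos p0 p1
  have hT : 0 < T := by
    have := Real.exp_pos (∑' i : ℕ, Real.log (1 + r * q ^ (2 * i + 1) + (q ^ (2 * i + 1)) ^ 2))
    rw [e] at this
    exact (pos_iff_pos_of_mul_pos this).mp (inv_pos.mpr hf)
  refine ⟨hT, ?_⟩
  have e2 := congrArg Real.log e
  rw [Real.log_exp, Real.log_mul (inv_pos.mpr hf).ne' hT.ne', Real.log_inv] at e2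
  have := hl.hasSum
  rw [e2] at this
  exact hs_congr this (fun _ => rfl) (by ring)

end Theta

section Left

lemma hs_congrC {ι : Type*} {f g : ι → ℂ} {a b : ℂ} (h : HasSum f a) (hf : ∀ i, g i = f i)
    (ha : b = a) : HasSum g b := by
  rw [ha, funext hf]; exact h

lemma coth_sum_nat {b : ℝ} (hb : 0 < b) :
    HasSum (fun n : ℕ => 1 / (((n : ℝ) + 1) ^ 2 + b ^ 2))
      (Real.pi * Real.cosh (Real.pi * b) / (2 * b * Real.sinh (Real.pi * b)) - 1 / (2 * b ^ 2)) := by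
  have hz : (Complex.I * b : ℂ) ∈ Complex.integerComplement := by
    rw [Complex.mem_integerComplement_iff]
    rintro ⟨n, hn⟩
    have := congrArg Complex.im hn
    simp at this
    linarith
  have h1 : HasSum (fun n : ℕ => cotTerm (Complex.I * b) n)
      (Real.pi * Complex.cot (Real.pi * (Complex.I * b)) - 1 / (Complex.I * b)) := by
    rw [cot_series_rep' hz]
    exact (summable_cotTerm hz).hasSum
  have hbc : (b : ℂ) ≠ 0 := by exact_mod_cast hb.ne'
  have hS : Real.sinh (Real.pi * b) ≠ 0 := (Real.sinh_pos_iff.mpr (by positivity)).ne'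
  have hSc : Complex.sinh (Real.pi * b) ≠ 0 := by exact_mod_cast hS
  have I2 : Complex.I ^ 2 = -1 := Complex.I_sq
  have h2 := h1.mul_left (Complex.I / (2 * b))
  rw [← Complex.hasSum_ofReal]
  refine hs_congrC h2 (fun n => ?_) ?_
  · rw [cotTerm_identity hz]
    have e : (Complex.I * b + (n + 1)) * (Complex.I * b - (n + 1)) = -((((n : ℝ) + 1) ^ 2 + b ^ 2 : ℝ) : ℂ) := by
      push_cast
      linear_combination (b : ℂ) ^ 2 * I2
    have hne : ((((n : ℝ) + 1) ^ 2 + b ^ 2 : ℝ) : ℂ) ≠ 0 := by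
      have : (0 : ℝ) < ((n : ℝ) + 1) ^ 2 + b ^ 2 := by positivity
      exact_mod_cast this.ne'
    rw [e, Complex.ofReal_div]
    field_simp
    rw [I2]; simp
  · rw [Complex.cot_eq_cos_div_sin, show (Real.pi * (Complex.I * b) : ℂ) = (Real.pi * b : ℂ) * Complex.I by ring,
      Complex.cos_mul_I, Complex.sin_mul_I]
    push_cast
    field_simp

lemma coth_sum {b : ℝ} (hb : 0 < b) :
    HasSum (fun m : ℤ => 1 / ((m : ℝ) ^ 2 + b ^ 2))
      (Real.pi * Real.cosh (Real.pi * b) / (b * Real.sinh (Real.pi * b))) := by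
  have h := coth_sum_nat hb
  have := HasSum.of_add_one_of_neg_add_one (f := fun m : ℤ => 1 / ((m : ℝ) ^ 2 + b ^ 2))
    (m := _) (m' := _) (hs_congr h (fun n => by push_cast; rfl) rfl)
    (hs_congr h (fun n => by push_cast; ring) rfl)
  refine hs_congr this (fun _ => rfl) ?_
  have hS : Real.sinh (Real.pi * b) ≠ 0 := (Real.sinh_pos_iff.mpr (by positivity)).ne'
  push_cast
  field_simp
  ring

lemma csch_sum {b : ℝ} (hb : 0 < b) :
    HasSum (fun m : ℤ => (-1) ^ m / ((m : ℝ) ^ 2 + b ^ 2))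
      (Real.pi / (b * Real.sinh (Real.pi * b))) := by
  have inj : Function.Injective fun k : ℤ => 2 * k := fun a b h => by simp at h; omega
  have h1 := coth_sum hb
  have h2 := (coth_sum (half_pos hb)).mul_left (1/4)
  have h3 : HasSum (fun m : ℤ => if m % 2 = 0 then 1 / ((m : ℝ) ^ 2 + b ^ 2) else 0)
      (1/4 * (Real.pi * Real.cosh (Real.pi * (b/2)) / ((b/2) * Real.sinh (Real.pi * (b/2))))) := by
    rw [← inj.hasSum_iff]
    · refine hs_congr h2 (fun k => ?_) rfl
      simp
      rw [← mul_inv]; congr 1; ring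
    · intro n hn
      rw [if_neg]
      intro h; exact hn ⟨n / 2, by simp; omega⟩
  refine hs_congr ((h3.mul_left 2).sub h1) (fun m => ?_) ?_
  · rw [m1]; split_ifs <;> ring
  · have hS : Real.sinh (Real.pi * (b/2)) ≠ 0 := (Real.sinh_pos_iff.mpr (by positivity)).ne'
    have hC : Real.cosh (Real.pi * (b/2)) ≠ 0 := (Real.cosh_pos _).ne'
    have e := Real.cosh_sq (Real.pi * (b/2))
    rw [show Real.pi * b = 2 * (Real.pi * (b/2)) by ring, Real.sinh_two_mul, Real.cosh_two_mul]
    generalize Real.sinh (Real.pi * (b/2)) = S at *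
    generalize Real.cosh (Real.pi * (b/2)) = C at *
    field_simp
    first | linear_combination 2 * e | linear_combination -4 * e

lemma inner_tsum61 {x : ℝ} (hx : 0 < x) (n : ℤ) {a : ℝ} (ha : a ≠ 0) :
    ∑' m : ℤ, (-1 : ℝ) ^ (m + n) / ((x * m) ^ 2 + a ^ 2) =
      (-1) ^ n * (Real.pi / (x * |a| * Real.sinh (Real.pi * |a| / x))) := by
  have ha' : 0 < |a| := abs_pos.mpr ha
  have hb : 0 < |a| / x := by positivity
  refine HasSum.tsum_eq (hs_congr ((csch_sum hb).mul_left ((-1) ^ n / x ^ 2)) (fun m => ?_) ?_)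
  · rw [zpow_add₀ (by norm_num), div_pow, sq_abs]
    have : (m : ℝ) ^ 2 + a ^ 2 / x ^ 2 ≠ 0 := by positivity
    have : (x * m) ^ 2 + a ^ 2 ≠ 0 := by positivity
    field_simp
  · rw [mul_div_assoc]
    field_simp

lemma log_series {r : ℝ} (hr : r ^ 2 = 3) {y : ℝ} (h0 : 0 < y) (h1 : y < 1) :
    HasSum (fun k : ℕ => wr r k * y ^ k / k) (-(1/2) * Real.log (1 - r * y + y ^ 2)) := by
  set z : ℂ := ⟨r / 2 * y, y / 2⟩ with hz
  have hn : Complex.normSq z = y ^ 2 := by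
    rw [hz, Complex.normSq_mk]; linear_combination y ^ 2 / 4 * hr
  have hz1 : ‖z‖ < 1 := by
    rw [← abs_of_nonneg (norm_nonneg z), ← sq_lt_one_iff_abs_lt_one, ← Complex.normSq_eq_norm_sq, hn]
    exact pow_lt_one₀ h0.le h1 two_ne_zero
  have hz2 : z ^ 2 = (r * y : ℝ) * z - (y ^ 2 : ℝ) := by
    apply Complex.ext
    · simp [hz, pow_two]; linear_combination -(y ^ 2 / 4) * hr
    · simp [hz, pow_two]; ring
  have hre : ∀ k : ℕ, (z ^ k).re = wr r k * y ^ k ∧ (z ^ (k + 1)).re = wr r (k + 1) * y ^ (k + 1) := by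
    intro k
    induction k with
    | zero => simp [wr_val, hz]
    | succ k ih =>
      refine ⟨by exact_mod_cast ih.2, ?_⟩
      have e : z ^ (k + 1 + 1) = (r * y : ℝ) * z ^ (k + 1) - (y ^ 2 : ℝ) * z ^ k := by
        linear_combination z ^ k * hz2
      rw [e, Complex.sub_re, Complex.re_ofReal_mul, Complex.re_ofReal_mul, ih.1, ih.2]
      have := wr_rec hr ((k : ℤ) + 1)
      rw [add_sub_cancel_right] at this
      push_cast
      linear_combination -(y ^ (k + 2)) * this
  have := Complex.hasSum_re (Complex.hasSum_taylorSeries_neg_log hz1)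
  refine hs_congr this (fun k => ?_) ?_
  · rw [Complex.div_natCast_re, (hre k).1]
  · rw [Complex.neg_re, Complex.log_re]
    have e : 1 - r * y + y ^ 2 = ‖1 - z‖ ^ 2 := by
      rw [← Complex.normSq_eq_norm_sq, Complex.normSq_apply]
      simp [hz]; linear_combination -(y ^ 2 / 4) * hr
    rw [e, Real.log_pow]; push_cast; ring

lemma chi_series {y : ℝ} (h0 : 0 < y) (h1 : y < 1) :
    HasSum (fun k : ℕ => chi k * y ^ k / k) (1 / (2 * Real.sqrt 3) *
      (Real.log (1 + Real.sqrt 3 * y + y ^ 2) - Real.log (1 + -Real.sqrt 3 * y + y ^ 2))) := by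
  have h3 : Real.sqrt 3 ^ 2 = 3 := Real.sq_sqrt (by norm_num)
  have hp : Real.sqrt 3 ≠ 0 := by positivity
  have a := log_series h3 h0 h1
  have b := log_series (r := -Real.sqrt 3) (by rw [neg_sq, h3]) h0 h1
  refine hs_congr ((a.sub b).mul_left (1 / Real.sqrt 3)) (fun k => ?_) ?_
  · simp only [wr]
    field_simp
    ring
  · rw [show 1 + -Real.sqrt 3 * y + y ^ 2 = 1 - Real.sqrt 3 * y + y ^ 2 by ring,
      show 1 - -Real.sqrt 3 * y + y ^ 2 = 1 + Real.sqrt 3 * y + y ^ 2 by ring]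
    field_simp
    ring

lemma double_sum {q : ℝ} (h0 : 0 < q) (h1 : q < 1) {S : ℝ}
    (hS : HasSum (fun j : ℕ => 1 / (2 * Real.sqrt 3) *
      (Real.log (1 + Real.sqrt 3 * q ^ (2 * j + 1) + (q ^ (2 * j + 1)) ^ 2)
       - Real.log (1 + -Real.sqrt 3 * q ^ (2 * j + 1) + (q ^ (2 * j + 1)) ^ 2))) S) :
    HasSum (fun k : ℕ => chi k / k * (q ^ k / (1 - q ^ (2 * k)))) S := by
  have hg := summable_geometric_of_lt_one h0.le h1
  have hsum : Summable fun x : ℕ × ℕ => chi x.2 * (q ^ (2 * x.1 + 1)) ^ x.2 / x.2 := by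
    refine Summable.of_norm_bounded (hg.mul_of_nonneg hg (fun _ => by positivity) (fun _ => by positivity)) ?_
    rintro ⟨j, k⟩
    rcases Nat.eq_zero_or_pos k with rfl | hk
    · simp; positivity
    · simp only [norm_mul, norm_div, Real.norm_eq_abs]
      rw [abs_of_nonneg (a := (q ^ (2 * j + 1)) ^ k) (by positivity), abs_of_nonneg (a := (k : ℝ)) (by positivity)]
      have hk' : (1 : ℝ) ≤ k := by exact_mod_cast hk
      calc _ ≤ 1 * (q ^ (2 * j + 1)) ^ k / 1 := by
            gcongr
            exact chi_abs _
        _ = q ^ ((2 * j + 1) * k) := by rw [← pow_mul]; ring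
        _ ≤ q ^ (j + k) := by
            apply pow_le_pow_of_le_one h0.le h1.le
            nlinarith [Nat.zero_le j]
        _ = _ := pow_add _ _ _
  obtain ⟨T, hT⟩ := hsum
  have f1 := hT.prod_fiberwise (fun j => chi_series (y := q ^ (2 * j + 1)) (by positivity)
    (pow_lt_one₀ h0.le h1 (by omega)))
  have eT := f1.unique hS
  have hT' := (Equiv.prodComm ℕ ℕ).hasSum_iff.mpr hT
  rw [← eT]
  refine hT'.prod_fiberwise (fun k => ?_)
  rcases Nat.eq_zero_or_pos k with rfl | hk
  · simpa using hasSum_zero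
  · have p0 : 0 ≤ q ^ (2 * k) := by positivity
    have p1 : q ^ (2 * k) < 1 := pow_lt_one₀ h0.le h1 (by omega)
    refine hs_congr ((hasSum_geometric_of_lt_one p0 p1).mul_left (chi k / k * q ^ k)) (fun j => ?_)
      (by ring)
    simp
    rw [← pow_mul, ← pow_mul]; ring

lemma chi_natAbs (n : ℤ) : chi ((6 * n + 1).natAbs : ℤ) = (-1) ^ n := by
  rw [m1, chi, o1, o1]
  split_ifs <;> first | omega | norm_num

lemma int_sum {q S : ℝ} (h : HasSum (fun k : ℕ => chi k / k * (q ^ k / (1 - q ^ (2 * k)))) S) :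
    HasSum (fun n : ℤ => (-1) ^ n / ((6 * n + 1).natAbs : ℝ) *
      (q ^ (6 * n + 1).natAbs / (1 - q ^ (2 * (6 * n + 1).natAbs)))) S := by
  have inj : Function.Injective fun n : ℤ => (6 * n + 1).natAbs := fun a b h => by
    simp only at h; omega
  rw [← inj.hasSum_iff] at h
  · refine hs_congr h (fun n => ?_) rfl
    simp only [Function.comp, chi_natAbs]
  · intro k hk
    have : chi k = 0 := by
      rw [chi, o1, o1]
      have a1 : (k : ℤ) % 12 ≠ 1 := fun h => hk ⟨((k : ℤ) - 1) / 6, by simp only; omega⟩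
      have a2 : (k : ℤ) % 12 ≠ 7 := fun h => hk ⟨((k : ℤ) - 1) / 6, by simp only; omega⟩
      have a3 : (-(k : ℤ)) % 12 ≠ 1 := fun h => hk ⟨(-(k : ℤ) - 1) / 6, by simp only; omega⟩
      have a4 : (-(k : ℤ)) % 12 ≠ 7 := fun h => hk ⟨(-(k : ℤ) - 1) / 6, by simp only; omega⟩
      simp [a1, a2, a3, a4]
    simp [this]

end Left
/-- For real `x > 0`, with `q = e^{-π/x}`,
`F_{(6,1)}(x) = -(π/(√3 x)) log((φ(-q⁴) - 3φ(-q³⁶) + 2√3 q f(-q²⁴))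
  / (φ(-q⁴) - 3φ(-q³⁶) - 2√3 q f(-q²⁴)))`. -/
theorem F61_evaluation (x : ℝ) (hx : 0 < x) (q : ℝ)
    (hq : q = Real.exp (-Real.pi / x)) :
    Tendsto (fun N : ℕ => ∑ n ∈ Finset.Ioo (-(N : ℤ)) (N : ℤ),
        ∑' m : ℤ, (-1 : ℝ) ^ (m + n) / ((x * m) ^ 2 + (6 * (n : ℝ) + 1) ^ 2))
      atTop
      (nhds (-(Real.pi / (Real.sqrt 3 * x)) *
        Real.log ((phi (-(q ^ 4)) - 3 * phi (-(q ^ 36)) + 2 * Real.sqrt 3 * q * fneg (q ^ 24))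
          / (phi (-(q ^ 4)) - 3 * phi (-(q ^ 36)) - 2 * Real.sqrt 3 * q * fneg (q ^ 24))))) := by

  have q0 : 0 < q := by rw [hq]; positivity
  have q1 : q < 1 := by
    rw [hq, Real.exp_lt_one_iff]
    exact div_neg_of_neg_of_pos (by linarith [Real.pi_pos]) hx
  have h3 : Real.sqrt 3 ^ 2 = 3 := Real.sq_sqrt (by norm_num)
  have hs3 : 0 < Real.sqrt 3 := by positivity
  obtain ⟨hA, sA⟩ := log_prod q0 q1 h3
  obtain ⟨hB, sB⟩ := log_prod q0 q1 (r := -Real.sqrt 3) (by rw [neg_sq, h3])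
  have key := int_sum (double_sum q0 q1 ((sA.sub sB).mul_left (1 / (2 * Real.sqrt 3))))
  have key2 := key.mul_left (2 * Real.pi / x)
  set A := -(1/2) * phi (-(q ^ 4)) + 3/2 * phi (-(q ^ 36)) + Real.sqrt 3 * (q * fneg (q ^ 24)) with hAd
  set B := -(1/2) * phi (-(q ^ 4)) + 3/2 * phi (-(q ^ 36)) + -Real.sqrt 3 * (q * fneg (q ^ 24)) with hBd
  have eR : (phi (-(q ^ 4)) - 3 * phi (-(q ^ 36)) + 2 * Real.sqrt 3 * q * fneg (q ^ 24))
          / (phi (-(q ^ 4)) - 3 * phi (-(q ^ 36)) - 2 * Real.sqrt 3 * q * fneg (q ^ 24)) = B / A := by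
    rw [show phi (-(q ^ 4)) - 3 * phi (-(q ^ 36)) + 2 * Real.sqrt 3 * q * fneg (q ^ 24) = -2 * B by
      rw [hBd]; ring, show phi (-(q ^ 4)) - 3 * phi (-(q ^ 36)) - 2 * Real.sqrt 3 * q * fneg (q ^ 24)
        = -2 * A by rw [hAd]; ring]
    rw [mul_div_mul_left _ _ (by norm_num)]
  rw [eR, Real.log_div hB.ne' hA.ne']
  have key3 : HasSum (fun n : ℤ =>
      ∑' m : ℤ, (-1 : ℝ) ^ (m + n) / ((x * m) ^ 2 + (6 * (n : ℝ) + 1) ^ 2))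
      (-(Real.pi / (Real.sqrt 3 * x)) * (Real.log B - Real.log A)) := by
    refine hs_congr key2 (fun n => ?_) ?_
    · have hne : (6 * (n : ℝ) + 1) ≠ 0 := by
        have : 6 * n + 1 ≠ 0 := by omega
        exact_mod_cast this
      have hK : |6 * (n : ℝ) + 1| = ((6 * n + 1).natAbs : ℝ) := by
        rw [Nat.cast_natAbs]; push_cast; rfl
      rw [inner_tsum61 hx n hne, hK]
      have hK0 : 0 < (6 * n + 1).natAbs := by omega
      generalize (6 * n + 1).natAbs = K at *
      have hKr : (0 : ℝ) < K := by exact_mod_cast hK0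
      have e1 : q ^ K = Real.exp (-(Real.pi * K / x)) := by
        rw [hq, ← Real.exp_nat_mul]; congr 1; ring
      have e2 : Real.sinh (Real.pi * K / x) = ((q ^ K)⁻¹ - q ^ K) / 2 := by
        rw [Real.sinh_eq, e1, Real.exp_neg, inv_inv]
      have e3 : q ^ (2 * K) = (q ^ K) ^ 2 := by ring
      rw [e2, e3]
      have p0 : 0 < q ^ K := by positivity
      have p1 : q ^ K < 1 := pow_lt_one₀ q0.le q1 hK0.ne'
      generalize q ^ K = Q at *
      have p2 : 1 - Q ^ 2 ≠ 0 := by nlinarith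
      field_simp
    · field_simp
      ring
  exact key3.comp (Finset.tendsto_Ioo_neg (R := ℤ))
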